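/- For every nonnegative integer m, the difference of odd-order logarithmic derivatives (d^{2m+1}/ds^{2m+1})[log|ζ(s)| − log β(s)] at s = 1/2 equals (1/2)·π^{2m+1}·|E_{2m}| + δ_{m,0}·log 2, where δ_{m,0} is 1 if m = 0 and 0 otherwise. -/

import Mathlib

/-- The Dirichlet beta function `β(s) = L(χ₄, s)`, as an entire continuation,
expressed via Hurwitz zeta: `β(s) = 4^{-s} (ζ(s,1/4) - ζ(s,3/4))`. -/
noncomputable def dirichletBeta (s : ℂ) : ℂ :=
  4 ^ (-s) * (HurwitzZeta.hurwitzZeta ((1/4 : ℝ) : UnitAddCircle) s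
    - HurwitzZeta.hurwitzZeta ((3/4 : ℝ) : UnitAddCircle) s)

/-- Euler numbers `E_n` (`E_0 = 1`, `E_2 = -1`, `E_4 = 5`, `E_{odd} = 0`). -/
def eulerNumber : ℕ → ℚ
  | 0 => 1
  | n + 1 => -(1/2) * ∑ k : Fin (n + 1),
      ((n + 1).choose k * (1 + (-1 : ℚ) ^ (n + 1 - (k : ℕ)) : ℚ) * eulerNumber k)

open Complex in
lemma cpow_diff_bound {x y : ℝ} (hx : 0 < x) (hxy : x ≤ y) (hy : y ≤ x + 1) {s : ℂ}
    (h1 : 1/4 < s.re) (h2 : ‖s‖ < 4) :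
    ‖(x : ℂ) ^ (-s) - (y : ℂ) ^ (-s)‖ ≤ 4 * (1 / |x| ^ (5/4 : ℝ) + 1 / |x| ^ (5 : ℝ)) := by
  set M : ℝ := 1 / |x| ^ (5/4 : ℝ) + 1 / |x| ^ (5 : ℝ) with hM
  have hM0 : 0 ≤ M := by positivity
  have hre : s.re < 4 := lt_of_le_of_lt (Complex.re_le_norm s) h2
  have key : ∀ t ∈ Set.Icc x y, ‖(-s) * (t : ℂ) ^ (-s - 1)‖ ≤ 4 * M := by
    intro t ht
    have ht0 : 0 < t := lt_of_lt_of_le hx ht.1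
    rw [norm_mul, norm_neg]
    refine mul_le_mul h2.le ?_ (norm_nonneg _) (by norm_num)
    rw [Complex.norm_cpow_eq_rpow_re_of_pos ht0]
    simp only [sub_re, neg_re, one_re]
    have hle : t ^ (-s.re - 1) ≤ x ^ (-s.re - 1) :=
      Real.rpow_le_rpow_of_nonpos hx ht.1 (by linarith)
    refine hle.trans ?_
    rw [hM, abs_of_pos hx, one_div, one_div, ← Real.rpow_neg hx.le, ← Real.rpow_neg hx.le]
    rcases le_total 1 x with h | h
    · have := Real.rpow_le_rpow_of_exponent_le h (show -s.re - 1 ≤ -(5/4) by linarith)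
      have h' : 0 ≤ x ^ (-5 : ℝ) := by positivity
      linarith
    · have := Real.rpow_le_rpow_of_exponent_ge hx h (show -5 ≤ -s.re - 1 by linarith)
      have h' : 0 ≤ x ^ (-(5/4) : ℝ) := by positivity
      linarith
  have hd : ∀ t ∈ Set.Icc x y,
      HasDerivWithinAt (fun t : ℝ => (t : ℂ) ^ (-s)) ((-s) * (t : ℂ) ^ (-s - 1)) (Set.Icc x y) t := by
    intro t ht
    have ht0 : 0 < t := lt_of_lt_of_le hx ht.1
    have h := (hasDerivAt_id (t : ℂ)).cpow_const (c := -s) (Or.inl (by simpa using ht0))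
    simpa using h.comp_ofReal.hasDerivWithinAt
  have := (convex_Icc x y).norm_image_sub_le_of_norm_hasDerivWithin_le hd key
    (Set.right_mem_Icc.2 hxy) (Set.left_mem_Icc.2 hxy)
  refine this.trans ?_
  have h3 : ‖x - y‖ ≤ 1 := by rw [Real.norm_eq_abs, abs_le]; constructor <;> linarith
  nlinarith

open Complex in
lemma hurwitz_diff_ne {a b : ℝ} (ha : 0 < a) (hab : a < b) (hb : b ≤ 1) :
    HurwitzZeta.hurwitzZeta (a : UnitAddCircle) (1/2)
      - HurwitzZeta.hurwitzZeta (b : UnitAddCircle) (1/2) ≠ 0 := by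
  let f : ℕ → ℂ → ℂ := fun k s => (((k + a : ℝ) : ℂ)) ^ (-s) - (((k + b : ℝ) : ℂ)) ^ (-s)
  let u : ℕ → ℝ := fun k => 4 * (1 / |(k + a : ℝ)| ^ (5/4 : ℝ) + 1 / |(k + a : ℝ)| ^ (5 : ℝ))
  have hu : Summable u := by
    refine Summable.mul_left _ (Summable.add ?_ ?_)
    · exact (Real.summable_one_div_nat_add_rpow a (5/4)).2 (by norm_num)
    · exact (Real.summable_one_div_nat_add_rpow a 5).2 (by norm_num)
  let U : Set ℂ := Metric.ball 2 (7/4)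
  have hU : IsOpen U := Metric.isOpen_ball
  have hUre : ∀ s ∈ U, 1/4 < s.re ∧ ‖s‖ < 4 := by
    intro s hs
    have hs' : ‖s - 2‖ < 7/4 := by simpa [U, dist_eq_norm] using hs
    constructor
    · have := (abs_le.1 (Complex.abs_re_le_norm (s - 2))).1
      simp at this
      linarith
    · have : ‖s‖ ≤ ‖s - 2‖ + ‖(2:ℂ)‖ := by simpa using norm_add_le (s - 2) 2
      have h2 : ‖(2:ℂ)‖ = 2 := by simp
      linarith
  have hfu : ∀ (k : ℕ) (s : ℂ), s ∈ U → ‖f k s‖ ≤ u k := by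
    intro k s hs
    have := hUre s hs
    exact cpow_diff_bound (by positivity) (by linarith) (by linarith) this.1 this.2
  have hfd : ∀ k : ℕ, DifferentiableOn ℂ (f k) U := by
    intro k s _
    have h1 : ((k + a : ℝ) : ℂ) ≠ 0 := by
      have : (0:ℝ) < k + a := by positivity
      exact_mod_cast this.ne'
    have h2 : ((k + b : ℝ) : ℂ) ≠ 0 := by
      have : (0:ℝ) < k + b := by have := ha.trans hab; positivity
      exact_mod_cast this.ne'
    refine DifferentiableAt.differentiableWithinAt ?_
    exact ((differentiableAt_id.neg).const_cpow (Or.inl h1)).sub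
      ((differentiableAt_id.neg).const_cpow (Or.inl h2))
  have hG := differentiableOn_tsum_of_summable_norm hu hfd hU hfu
  have hGa := hG.analyticOnNhd hU
  have hHa : AnalyticOnNhd ℂ (fun s => HurwitzZeta.hurwitzZeta (a : UnitAddCircle) s
      - HurwitzZeta.hurwitzZeta (b : UnitAddCircle) s) U :=
    (HurwitzZeta.differentiable_hurwitzZeta_sub_hurwitzZeta _ _).differentiableOn.analyticOnNhd hU
  have h2U : (2 : ℂ) ∈ U := by simp [U]
  have hhalf : (1/2 : ℂ) ∈ U := by
    simp only [U, Metric.mem_ball, dist_eq_norm]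
    rw [show (1/2 - 2 : ℂ) = ((-(3/2) : ℝ) : ℂ) by push_cast; norm_num, Complex.norm_real]
    norm_num
  have hev : (fun s => HurwitzZeta.hurwitzZeta (a : UnitAddCircle) s
      - HurwitzZeta.hurwitzZeta (b : UnitAddCircle) s) =ᶠ[nhds 2] fun s => ∑' k, f k s := by
    have : {s : ℂ | 1 < s.re} ∈ nhds (2:ℂ) :=
      (isOpen_lt continuous_const Complex.continuous_re).mem_nhds (by simp)
    filter_upwards [this] with s hs
    have e1 := HurwitzZeta.hasSum_hurwitzZeta_of_one_lt_re (a := a) ⟨ha.le, by linarith⟩ hs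
    have e2 := HurwitzZeta.hasSum_hurwitzZeta_of_one_lt_re (a := b) ⟨by linarith, hb⟩ hs
    rw [← (e1.sub e2).tsum_eq]
    refine tsum_congr fun k => ?_
    simp [f, Complex.cpow_neg]
  have heq := hHa.eqOn_of_preconnected_of_eventuallyEq hGa
    (convex_ball _ _).isPreconnected h2U hev hhalf
  simp only at heq
  rw [heq]
  have hs : Summable fun k => f k (1/2) := Summable.of_norm_bounded hu fun k => hfu k _ hhalf
  have hpos : ∀ k, 0 < (f k (1/2)).re := by
    intro k
    have h1 : (0:ℝ) < k + a := by positivity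
    have h2 : (k + a : ℝ) < k + b := by linarith
    have e : f k (1/2) = (((k + a : ℝ) ^ (-(1/2) : ℝ) - (k + b : ℝ) ^ (-(1/2) : ℝ) : ℝ) : ℂ) := by
      rw [Complex.ofReal_sub, Complex.ofReal_cpow h1.le, Complex.ofReal_cpow (h1.trans h2).le]
      simp [f]
    rw [e, Complex.ofReal_re, sub_pos]
    exact Real.rpow_lt_rpow_of_neg h1 h2 (by norm_num)
  intro h0
  have hre := congrArg Complex.re h0
  rw [Complex.re_tsum hs] at hre
  have := (Complex.hasSum_re hs.hasSum).summable.tsum_pos (fun k => (hpos k).le) 0 (hpos 0)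
  simp at hre
  linarith

lemma zeta_half_ne : riemannZeta (1/2) ≠ 0 := by
  have h := hurwitz_diff_ne (a := 1/2) (b := 1) (by norm_num) (by norm_num) le_rfl
  have h1 : (((1:ℝ)) : UnitAddCircle) = 0 := AddCircle.coe_period 1
  rw [h1, HurwitzZeta.hurwitzZeta_zero] at h
  intro h0
  apply h
  have hne : (1/2 : ℂ) ≠ 1 := by norm_num
  have e := DirichletCharacter.LFunctionTrivChar_eq_mul_riemannZeta (N := 2) hne
  rw [h0, mul_zero, DirichletCharacter.LFunctionTrivChar, DirichletCharacter.LFunction,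
    ZMod.LFunction, mul_eq_zero] at e
  have e' := e.resolve_left (by simp)
  have hu : (Finset.univ : Finset (ZMod 2)) = {0, 1} := by decide
  rw [hu, Finset.sum_pair (by decide)] at e'
  have c : ZMod.toAddCircle (1 : ZMod 2) = ((1/2 : ℝ) : UnitAddCircle) := by
    rw [ZMod.toAddCircle_apply]
    simp [ZMod.val_one]
  rw [c] at e'
  simp only [map_one, one_mul, MulChar.map_zero, zero_mul, zero_add] at e'
  rw [e', h0, sub_zero]

lemma circle_three_quarters : ((3/4 : ℝ) : UnitAddCircle) = -((1/4 : ℝ) : UnitAddCircle) := by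
  have h1 : (((1:ℝ)) : UnitAddCircle) = 0 := AddCircle.coe_period 1
  have : ((3/4 : ℝ) : UnitAddCircle) + ((1/4 : ℝ) : UnitAddCircle) = 0 := by
    rw [← AddCircle.coe_add, ← h1]; norm_num
  exact eq_neg_of_add_eq_zero_left this

lemma circle_one : ZMod.toAddCircle (1 : ZMod 4) = ((1/4 : ℝ) : UnitAddCircle) := by
  rw [ZMod.toAddCircle_apply]
  have : (1 : ZMod 4).val = 1 := rfl
  simp [this]

lemma circle_three : ZMod.toAddCircle (3 : ZMod 4) = ((3/4 : ℝ) : UnitAddCircle) := by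
  rw [ZMod.toAddCircle_apply]
  have : (3 : ZMod 4).val = 3 := rfl
  simp [this]

lemma stdAddChar_four_one : (ZMod.stdAddChar (1 : ZMod 4) : ℂ) = Complex.I := by
  have := ZMod.stdAddChar_coe (N := 4) 1
  simp only [Int.cast_one] at this
  rw [this, show (2 * (Real.pi : ℂ) * Complex.I * 1 / (4 : ℕ)) = Real.pi / 2 * Complex.I by
    push_cast; ring]
  exact Complex.exp_pi_div_two_mul_I

lemma stdAddChar_four_nat (n : ℕ) : (ZMod.stdAddChar (n : ZMod 4) : ℂ) = Complex.I ^ n := by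
  rw [← stdAddChar_four_one, ← AddChar.map_nsmul_eq_pow]; simp

lemma sinZeta_quarter (s : ℂ) :
    HurwitzZeta.sinZeta ((1/4 : ℝ) : UnitAddCircle) s = dirichletBeta s := by
  have e1 := ZMod.LFunction_stdAddChar_eq_expZeta (1 : ZMod 4) s (Or.inl (by decide))
  have e3 := ZMod.LFunction_stdAddChar_eq_expZeta (3 : ZMod 4) s (Or.inl (by decide))
  rw [circle_one] at e1
  rw [circle_three, circle_three_quarters] at e3
  rw [HurwitzZeta.sinZeta_eq, ← e1, ← e3, ZMod.LFunction, ZMod.LFunction, dirichletBeta]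
  have hu : (Finset.univ : Finset (ZMod 4)) = {0, 1, 2, 3} := by decide
  have s0 := stdAddChar_four_nat 0
  have s1 := stdAddChar_four_nat 1
  have s2 := stdAddChar_four_nat 2
  have s3 := stdAddChar_four_nat 3
  push_cast at s0 s1 s2 s3
  have m1 : (3 : ZMod 4) * 2 = 2 := by decide
  have m2 : (3 : ZMod 4) * 3 = 1 := by decide
  rw [hu]
  rw [Finset.sum_insert (by decide), Finset.sum_insert (by decide), Finset.sum_pair (by decide),
    Finset.sum_insert (by decide), Finset.sum_insert (by decide), Finset.sum_pair (by decide)]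
  simp only [one_mul, mul_zero, mul_one, m1, m2, s0, s1, s2, s3, circle_one, circle_three, pow_succ,
    pow_zero, Complex.I_mul_I]
  push_cast
  field_simp
  ring_nf

lemma beta_one_sub {s : ℂ} (hs : ∀ (n : ℕ), s ≠ -n) :
    dirichletBeta (1 - s) = 4 ^ (s - 1) * 4 * (2 * Real.pi) ^ (-s) * Complex.Gamma s *
      Complex.sin (Real.pi * s / 2) * dirichletBeta s := by
  have h := HurwitzZeta.hurwitzZetaOdd_one_sub ((1/4 : ℝ) : UnitAddCircle) hs
  rw [sinZeta_quarter, HurwitzZeta.hurwitzZetaOdd_eq, ← circle_three_quarters, div_eq_iff two_ne_zero] at h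
  conv_lhs => rw [dirichletBeta, h]
  rw [neg_sub]
  ring

lemma functional_ratio {x : ℝ} (h0 : 0 < x) (h1 : x < 1) (hz : riemannZeta x ≠ 0)
    (hb : dirichletBeta x ≠ 0) :
    (Real.log ‖riemannZeta ((1 - x : ℝ) : ℂ)‖ - Real.log ‖dirichletBeta ((1 - x : ℝ) : ℂ)‖) =
    (Real.log ‖riemannZeta (x : ℂ)‖ - Real.log ‖dirichletBeta (x : ℂ)‖) +
     (Real.log 2 - x * Real.log 4 + Real.log (Real.cos (Real.pi * x / 2))
      - Real.log (Real.sin (Real.pi * x / 2))) := by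
  have hs : ∀ n : ℕ, (x : ℂ) ≠ -n := by
    intro n h
    have : x = -n := by exact_mod_cast h
    have hn : (0:ℝ) ≤ n := by positivity
    linarith
  have hx1 : (x : ℂ) ≠ 1 := by exact_mod_cast h1.ne
  have hpi := Real.pi_pos
  have hc : 0 < Real.cos (Real.pi * x / 2) :=
    Real.cos_pos_of_mem_Ioo ⟨by nlinarith, by nlinarith⟩
  have hsn : 0 < Real.sin (Real.pi * x / 2) :=
    Real.sin_pos_of_pos_of_lt_pi (by positivity) (by nlinarith)
  have hG : Complex.Gamma x ≠ 0 := Complex.Gamma_ne_zero hs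
  have e1 := riemannZeta_one_sub hs hx1
  have e2 := beta_one_sub hs
  push_cast
  rw [e1, e2]
  have n1 : ‖(2 * (Real.pi : ℂ)) ^ (-(x:ℂ))‖ ≠ 0 := by
    simp [Complex.cpow_eq_zero_iff, hpi.ne']
  have n2 : ‖(4:ℂ) ^ ((x:ℂ) - 1)‖ = (4:ℝ) ^ (x - 1) := by
    rw [show (4:ℂ) = ((4:ℝ):ℂ) by norm_num, Complex.norm_cpow_eq_rpow_re_of_pos (by norm_num)]
    simp
  have n3 : ‖Complex.cos (Real.pi * x / 2)‖ = Real.cos (Real.pi * x / 2) := by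
    rw [show (Real.pi * x / 2 : ℂ) = ((Real.pi * x / 2 : ℝ) : ℂ) by push_cast; rfl,
      ← Complex.ofReal_cos, Complex.norm_real, Real.norm_of_nonneg hc.le]
  have n4 : ‖Complex.sin (Real.pi * x / 2)‖ = Real.sin (Real.pi * x / 2) := by
    rw [show (Real.pi * x / 2 : ℂ) = ((Real.pi * x / 2 : ℝ) : ℂ) by push_cast; rfl,
      ← Complex.ofReal_sin, Complex.norm_real, Real.norm_of_nonneg hsn.le]
  simp only [norm_mul]
  rw [n2, n3, n4]
  have g := norm_ne_zero_iff.2 hG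
  have z := norm_ne_zero_iff.2 hz
  have b := norm_ne_zero_iff.2 hb
  have q : (4:ℝ) ^ (x - 1) ≠ 0 := by positivity
  have k2 : ‖(2:ℂ)‖ = 2 := by simp
  have k4 : ‖(4:ℂ)‖ = 4 := by simp
  rw [k2, k4]
  rw [Real.log_mul (by positivity) z, Real.log_mul (by positivity) hc.ne',
    Real.log_mul (by positivity) g, Real.log_mul (by positivity) n1,
    Real.log_mul (by positivity) b, Real.log_mul (by positivity) hsn.ne',
    Real.log_mul (by positivity) g, Real.log_mul (by positivity) n1,
    Real.log_mul q (by norm_num), Real.log_rpow (by norm_num)]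
  ring

noncomputable def secF (x : ℝ) : ℝ := (Real.cos x)⁻¹

lemma cos_ne_near : ∀ᶠ x in nhds (0:ℝ), Real.cos x ≠ 0 :=
  Real.continuous_cos.continuousAt.eventually_ne (by simp)

lemma secF_contDiffAt {x : ℝ} (hx : Real.cos x ≠ 0) (n : WithTop ℕ∞) : ContDiffAt ℝ n secF x :=
  Real.contDiff_cos.contDiffAt.inv hx

lemma tan_contDiffAt {x : ℝ} (hx : Real.cos x ≠ 0) (n : WithTop ℕ∞) : ContDiffAt ℝ n Real.tan x :=
  Real.contDiffAt_tan.2 hx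

lemma deriv_secF_ev : deriv secF =ᶠ[nhds 0] secF * Real.tan := by
  filter_upwards [cos_ne_near] with x hx
  have := (Real.hasDerivAt_cos x).inv hx
  change HasDerivAt secF _ x at this
  rw [this.deriv, Pi.mul_apply, secF, Real.tan_eq_sin_div_cos]
  field_simp

lemma deriv_tan_ev : deriv Real.tan =ᶠ[nhds 0] fun x => 1 + (Real.tan * Real.tan) x := by
  filter_upwards [cos_ne_near] with x hx
  rw [(Real.hasDerivAt_tan hx).deriv, Pi.mul_apply, Real.tan_eq_sin_div_cos]
  field_simp
  rw [add_comm]; exact (Real.sin_sq_add_cos_sq x).symm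

lemma sec_tan_nonneg (n : ℕ) : 0 ≤ iteratedDeriv n secF 0 ∧ 0 ≤ iteratedDeriv n Real.tan 0 := by
  have c0 : Real.cos 0 ≠ 0 := by simp
  induction n using Nat.strong_induction_on with
  | _ n ih =>
    cases n with
    | zero => simp [secF]
    | succ n =>
      constructor
      · rw [iteratedDeriv_succ', deriv_secF_ev.iteratedDeriv_eq,
          iteratedDeriv_mul (secF_contDiffAt c0 _) (tan_contDiffAt c0 _)]
        refine Finset.sum_nonneg fun i hi => ?_
        have hi' := Finset.mem_range.1 hi
        have h1 := (ih i hi').1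
        have h2 := (ih (n - i) (by omega)).2
        positivity
      · rw [iteratedDeriv_succ', deriv_tan_ev.iteratedDeriv_eq]
        have hs : 0 ≤ iteratedDeriv n (Real.tan * Real.tan) 0 := by
          rw [iteratedDeriv_mul (tan_contDiffAt c0 _) (tan_contDiffAt c0 _)]
          refine Finset.sum_nonneg fun i hi => ?_
          have hi' := Finset.mem_range.1 hi
          have h1 := (ih i hi').2
          have h2 := (ih (n - i) (by omega)).2
          positivity
        rcases Nat.eq_zero_or_pos n with rfl | hn
        · simp
        · rw [iteratedDeriv_const_add hn]; exact hs

lemma iter_cos_zero (n : ℕ) :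
    ((iteratedDeriv n Real.cos 0 : ℝ) : ℂ) = Complex.I ^ n * (1 + (-1) ^ n) / 2 := by
  rcases Nat.even_or_odd' n with ⟨k, rfl | rfl⟩
  · rw [Real.iteratedDeriv_even_cos]
    simp [pow_mul]; ring
  · rw [Real.iteratedDeriv_odd_cos]
    simp [pow_succ, pow_mul]

lemma sec_rec (n : ℕ) (hn : 0 < n) : ∑ i ∈ Finset.range (n + 1),
      (n.choose i : ℝ) * iteratedDeriv i secF 0 * iteratedDeriv (n - i) Real.cos 0 = 0 := by
  have c0 : Real.cos 0 ≠ 0 := by simp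
  rw [← iteratedDeriv_mul (secF_contDiffAt c0 _) Real.contDiff_cos.contDiffAt]
  have : secF * Real.cos =ᶠ[nhds 0] fun _ => (1:ℝ) := by
    filter_upwards [cos_ne_near] with x hx
    simp [secF, hx]
  rw [this.iteratedDeriv_eq, iteratedDeriv_const]
  simp [hn.ne']

lemma euler_rec (n : ℕ) : eulerNumber (n + 1) = -(1/2) * ∑ k ∈ Finset.range (n + 1),
      ((n + 1).choose k * (1 + (-1 : ℚ) ^ (n + 1 - k) : ℚ) * eulerNumber k) := by
  rw [eulerNumber, Finset.sum_range]

lemma sec_euler (n : ℕ) :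
    ((iteratedDeriv n secF 0 : ℝ) : ℂ) = Complex.I ^ n * (eulerNumber n : ℂ) := by
  induction n using Nat.strong_induction_on with
  | _ n ih =>
    cases n with
    | zero => simp [secF, eulerNumber]
    | succ n =>
      have h := congrArg (fun x : ℝ => (x : ℂ)) (sec_rec (n + 1) n.succ_pos)
      rw [Finset.sum_range_succ] at h
      push_cast at h
      simp only [iter_cos_zero] at h
      have h2 : ∑ i ∈ Finset.range (n + 1), (((n+1).choose i : ℂ) *
          ((iteratedDeriv i secF 0 : ℝ) : ℂ) *
          (Complex.I ^ (n + 1 - i) * (1 + (-1) ^ (n + 1 - i)) / 2)) =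
          Complex.I ^ (n + 1) * (1/2) * ∑ i ∈ Finset.range (n + 1), (((n+1).choose i : ℂ) *
          (1 + (-1) ^ (n + 1 - i)) * (eulerNumber i : ℂ)) := by
        rw [Finset.mul_sum]
        refine Finset.sum_congr rfl fun i hi => ?_
        have hi' := Finset.mem_range.1 hi
        rw [ih i hi']
        have : Complex.I ^ (n + 1) = Complex.I ^ i * Complex.I ^ (n + 1 - i) := by
          rw [← pow_add]; congr 1; omega
        rw [this]; ring
      rw [h2] at h
      have h3 := congrArg (fun x : ℚ => (x : ℂ)) (euler_rec n)
      push_cast at h3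
      rw [h3]
      simp at h
      linear_combination h

lemma sec_abs_euler (m : ℕ) :
    iteratedDeriv (2 * m) secF 0 = ((|eulerNumber (2 * m)| : ℚ) : ℝ) := by
  have h := sec_euler (2 * m)
  rw [pow_mul, Complex.I_sq] at h
  have h' : iteratedDeriv (2 * m) secF 0 = (-1) ^ m * (eulerNumber (2 * m) : ℝ) := by
    exact_mod_cast h
  have hn := (sec_tan_nonneg (2 * m)).1
  rw [← abs_of_nonneg hn, h', abs_mul]
  simp

lemma secF_scaled (n : ℕ) (c x : ℝ) (hx : Real.cos (c * x) ≠ 0) :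
    iteratedDeriv n (fun x => secF (c * x)) x = c ^ n * iteratedDeriv n secF (c * x) := by
  induction n generalizing x with
  | zero => simp
  | succ n ih =>
    rw [iteratedDeriv_succ]
    have hev : iteratedDeriv n (fun x => secF (c * x)) =ᶠ[nhds x]
        fun x => c ^ n * iteratedDeriv n secF (c * x) := by
      have : ∀ᶠ y in nhds x, Real.cos (c * y) ≠ 0 :=
        (Real.continuous_cos.comp (continuous_const_mul c)).continuousAt.eventually_ne hx
      filter_upwards [this] with y hy using ih y hy
    rw [hev.deriv_eq, deriv_const_mul_field, deriv_comp_mul_left, iteratedDeriv_succ, smul_eq_mul]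
    ring

lemma H_iter (m : ℕ) : iteratedDeriv (2 * m + 1) (fun x : ℝ => Real.log 2 - x * Real.log 4 +
      Real.log (Real.cos (Real.pi * x / 2)) - Real.log (Real.sin (Real.pi * x / 2))) (1/2) =
    - (Real.pi ^ (2 * m + 1) * ((|eulerNumber (2 * m)| : ℚ) : ℝ))
      - (if m = 0 then 2 * Real.log 2 else 0) := by
  have hpi := Real.pi_pos
  rw [iteratedDeriv_succ']
  have hev : deriv (fun x : ℝ => Real.log 2 - x * Real.log 4 +
      Real.log (Real.cos (Real.pi * x / 2)) - Real.log (Real.sin (Real.pi * x / 2)))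
      =ᶠ[nhds (1/2)] fun x => - Real.log 4 + (-Real.pi) * secF (Real.pi * (x - 1/2)) := by
    have : Set.Ioo (0:ℝ) 1 ∈ nhds (1/2 : ℝ) := Ioo_mem_nhds (by norm_num) (by norm_num)
    filter_upwards [this] with x hx
    have hc : 0 < Real.cos (Real.pi * x / 2) :=
      Real.cos_pos_of_mem_Ioo ⟨by nlinarith [hx.1], by nlinarith [hx.2]⟩
    have hsn : 0 < Real.sin (Real.pi * x / 2) :=
      Real.sin_pos_of_pos_of_lt_pi (by have := hx.1; positivity) (by nlinarith [hx.2])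
    have d0 : HasDerivAt (fun x : ℝ => Real.pi * x / 2) (Real.pi / 2) x := by
      simpa using ((hasDerivAt_id x).const_mul Real.pi).div_const 2
    have d1 := (d0.cos).log hc.ne'
    have d2 := (d0.sin).log hsn.ne'
    have d3 := (((hasDerivAt_id x).mul_const (Real.log 4)).const_sub (Real.log 2))
    have d := (d3.add d1).sub d2
    refine d.deriv.trans ?_
    have hcos : Real.cos (Real.pi * (x - 1/2)) =
        2 * Real.sin (Real.pi * x / 2) * Real.cos (Real.pi * x / 2) := by
      rw [← Real.sin_two_mul, ← Real.cos_sub_pi_div_two]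
      congr 1; ring
    rw [secF, hcos]
    have hsc := Real.sin_sq_add_cos_sq (Real.pi * x / 2)
    field_simp
    linear_combination (-Real.pi) * hsc
  rw [hev.iteratedDeriv_eq]
  have hsec : iteratedDeriv (2 * m) (fun x => (-Real.pi) * secF (Real.pi * (x - 1/2))) (1/2)
      = - (Real.pi ^ (2 * m + 1) * ((|eulerNumber (2 * m)| : ℚ) : ℝ)) := by
    rw [iteratedDeriv_const_mul_field]
    have := congrFun (iteratedDeriv_comp_sub_const (2 * m) (fun x => secF (Real.pi * x)) (1/2)) (1/2)
    rw [this, secF_scaled _ _ _ (by simp), ← sec_abs_euler]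
    simp
    ring
  rcases Nat.eq_zero_or_pos m with rfl | hm
  · have h4 : Real.log 4 = 2 * Real.log 2 := by
      rw [show (4:ℝ) = 2 ^ 2 by norm_num, Real.log_pow]; norm_num
    simp [secF, eulerNumber, h4]
    ring
  · rw [iteratedDeriv_const_add (by omega), hsec]
    simp [hm.ne']

lemma beta_half_ne : dirichletBeta (1/2) ≠ 0 := by
  rw [dirichletBeta]
  refine mul_ne_zero (by simp) ?_
  exact hurwitz_diff_ne (by norm_num) (by norm_num) (by norm_num)

lemma beta_differentiable : Differentiable ℂ dirichletBeta := by
  intro s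
  exact (differentiableAt_id.neg.const_cpow (Or.inl (by norm_num))).mul
    (HurwitzZeta.differentiable_hurwitzZeta_sub_hurwitzZeta _ _ s)

lemma log_norm_contDiffAt {f : ℂ → ℂ} {x : ℝ} (hf : AnalyticAt ℂ f x) (h0 : f x ≠ 0) (n : ℕ) :
    ContDiffAt ℝ n (fun y : ℝ => Real.log ‖f y‖) x := by
  have h1 : ContDiffAt ℝ n f (x : ℂ) := (hf.contDiffAt (n := n)).restrict_scalars ℝ
  have h2 : ContDiffAt ℝ n (fun y : ℝ => f y) x :=
    h1.comp x (Complex.ofRealCLM.contDiff.contDiffAt)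
  exact (h2.norm ℝ h0).log (norm_ne_zero_iff.2 h0)

lemma zeta_analytic_half : AnalyticAt ℂ riemannZeta ((1/2 : ℝ) : ℂ) := by
  have : DifferentiableOn ℂ riemannZeta {1}ᶜ := fun s hs =>
    (differentiableAt_riemannZeta hs).differentiableWithinAt
  refine this.analyticAt (isOpen_compl_singleton.mem_nhds ?_)
  simp only [Set.mem_compl_iff, Set.mem_singleton_iff]
  norm_num

/-- for every `m ≥ 0`,
`(d^{2m+1}/ds^{2m+1})[log|ζ(s)| - log β(s)]` at `s = 1/2` equals
`½ π^{2m+1} |E_{2m}| + δ_{m,0} log 2`. -/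
theorem log_zeta_minus_log_beta_odd_deriv (m : ℕ) :
    iteratedDeriv (2 * m + 1)
        (fun x : ℝ => Real.log ‖riemannZeta (x : ℂ)‖ - Real.log ‖dirichletBeta (x : ℂ)‖)
        (1 / 2) =
      (1 / 2) * Real.pi ^ (2 * m + 1) * ((|eulerNumber (2 * m)| : ℚ) : ℝ)
        + (if m = 0 then Real.log 2 else 0) := by
  set F : ℝ → ℝ := fun x : ℝ =>
    Real.log ‖riemannZeta (x : ℂ)‖ - Real.log ‖dirichletBeta (x : ℂ)‖ with hF
  have hcast : (((1/2 : ℝ)) : ℂ) = 1/2 := by push_cast; rfl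
  have hz : riemannZeta ((1/2 : ℝ) : ℂ) ≠ 0 := by rw [hcast]; exact zeta_half_ne
  have hb : dirichletBeta ((1/2 : ℝ) : ℂ) ≠ 0 := by rw [hcast]; exact beta_half_ne
  have hba : AnalyticAt ℂ dirichletBeta ((1/2 : ℝ) : ℂ) := beta_differentiable.analyticAt _
  have cF : ContDiffAt ℝ ((2 * m + 1 : ℕ)) F (1/2) :=
    (log_norm_contDiffAt zeta_analytic_half hz _).sub (log_norm_contDiffAt hba hb _)
  set H : ℝ → ℝ := fun x : ℝ => Real.log 2 - x * Real.log 4 +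
      Real.log (Real.cos (Real.pi * x / 2)) - Real.log (Real.sin (Real.pi * x / 2)) with hH
  have hpi := Real.pi_pos
  have cH : ContDiffAt ℝ ((2 * m + 1 : ℕ)) H (1/2) := by
    have hc : 0 < Real.cos (Real.pi * (1/2) / 2) :=
      Real.cos_pos_of_mem_Ioo ⟨by nlinarith, by nlinarith⟩
    have hsn : 0 < Real.sin (Real.pi * (1/2) / 2) :=
      Real.sin_pos_of_pos_of_lt_pi (by positivity) (by nlinarith)
    have l : ContDiffAt ℝ ((2 * m + 1 : ℕ)) (fun x : ℝ => Real.pi * x / 2) (1/2) := by fun_prop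
    exact (ContDiffAt.add (by fun_prop) (l.cos.log hc.ne')).sub (l.sin.log hsn.ne')
  have hev : (fun x => F (1 - x)) =ᶠ[nhds (1/2)] F + H := by
    have : Set.Ioo (0:ℝ) 1 ∈ nhds (1/2 : ℝ) := Ioo_mem_nhds (by norm_num) (by norm_num)
    have z' : ∀ᶠ x : ℝ in nhds (1/2), riemannZeta (x : ℂ) ≠ 0 :=
      (zeta_analytic_half.continuousAt.comp Complex.continuous_ofReal.continuousAt).eventually_ne hz
    have b' : ∀ᶠ x : ℝ in nhds (1/2), dirichletBeta (x : ℂ) ≠ 0 :=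
      (hba.continuousAt.comp Complex.continuous_ofReal.continuousAt).eventually_ne hb
    filter_upwards [this, z', b'] with x hx h1 h2
    exact functional_ratio hx.1 hx.2 h1 h2
  have e := hev.iteratedDeriv_eq (2 * m + 1)
  rw [iteratedDeriv_add cF cH, H_iter m] at e
  have e2 := congrFun (iteratedDeriv_comp_const_sub (2 * m + 1) F 1) (1/2)
  rw [e2] at e
  norm_num [pow_succ, pow_mul] at e
  norm_num [pow_succ, pow_mul]
  split_ifs at e ⊢ <;> linarith
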